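/- arXiv:1808.01922 — 3 statements merged into one kernel-verified Lean document; each statement's English description precedes it below -/
import Mathlib

section
/- Let A be a Hopf algebra over a field k with bijective antipode S. Let Q ∈ A be a nonzero idempotent and y ∈ A such that (1 ⊗ Q)Δ(Q) = Δ(Q)(1 ⊗ Q) = y ⊗ Q. Then y is a right group-like projection, i.e. y is a nonzero idempotent with Δ(y)(1 ⊗ y) = y ⊗ y = (1 ⊗ y)Δ(y). Moreover, if S²(Q) = Q then S²(y) = y. -/
open scoped TensorProduct

noncomputable section

variable (k : Type*) [Field k] {A : Type*} [Ring A] [HopfAlgebra k A]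

/-- `P` is a right group-like projection: a nonzero idempotent with
`Δ(P)(1 ⊗ P) = P ⊗ P = (1 ⊗ P)Δ(P)`. -/
def IsRightGroupLikeProjection (P : A) : Prop :=
  P ≠ 0 ∧ P * P = P ∧
    Coalgebra.comul (R := k) P * ((1 : A) ⊗ₜ[k] P) = P ⊗ₜ[k] P ∧
    ((1 : A) ⊗ₜ[k] P) * Coalgebra.comul (R := k) P = P ⊗ₜ[k] P

/-- `P` is a left group-like projection: a nonzero idempotent with
`Δ(P)(P ⊗ 1) = P ⊗ P = (P ⊗ 1)Δ(P)`. -/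
def IsLeftGroupLikeProjection (P : A) : Prop :=
  P ≠ 0 ∧ P * P = P ∧
    Coalgebra.comul (R := k) P * (P ⊗ₜ[k] (1 : A)) = P ⊗ₜ[k] P ∧
    (P ⊗ₜ[k] (1 : A)) * Coalgebra.comul (R := k) P = P ⊗ₜ[k] P

/-- A two-sided group-like projection. -/
def IsTwoSidedGroupLikeProjection (P : A) : Prop :=
  IsRightGroupLikeProjection k P ∧ IsLeftGroupLikeProjection k P

/-- `N_P^l = {x : (1 ⊗ P)Δ(x) = x ⊗ P}`. -/
def NPlSet (P : A) : Set A :=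
  {x : A | ((1 : A) ⊗ₜ[k] P) * Coalgebra.comul (R := k) x = x ⊗ₜ[k] P}

/-- `N_P^r = {x : Δ(x)(1 ⊗ P) = x ⊗ P}`. -/
def NPrSet (P : A) : Set A :=
  {x : A | Coalgebra.comul (R := k) x * ((1 : A) ⊗ₜ[k] P) = x ⊗ₜ[k] P}

/-- `N_P = N_P^l ∩ N_P^r`. -/
def NPSet (P : A) : Set A := NPlSet k P ∩ NPrSet k P

/-- `V_P = {(μ ⊗ id)(Δ(P)) : μ ∈ A*}`, the smallest left coideal containing `P`. -/
def VPSet (P : A) : Set A :=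
  {x : A | ∃ μ : A →ₗ[k] k,
    x = TensorProduct.lid k A ((TensorProduct.map μ LinearMap.id) (Coalgebra.comul (R := k) P))}

/-- A submodule `N ⊆ A` is a left coideal if `Δ(N) ⊆ A ⊗ N`. -/
def IsLeftCoideal (N : Submodule k A) : Prop :=
  ∀ x ∈ N, Coalgebra.comul (R := k) x ∈
    LinearMap.range (TensorProduct.map (LinearMap.id : A →ₗ[k] A) N.subtype)

/-- A subalgebra `N ⊆ A` is a left coideal subalgebra if `Δ(N) ⊆ A ⊗ N`. -/
def IsLeftCoidealSubalgebra (N : Subalgebra k A) : Prop :=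
  IsLeftCoideal k (Subalgebra.toSubmodule N)

open Coalgebra HopfAlgebra WithConv

/-- The comultiplication is the convolution product of the two inclusions `A → A ⊗ A`. -/
theorem toConv_includeLeft_mul_toConv_includeRight :
    toConv (Algebra.TensorProduct.includeLeft (R := k) (S := k) (A := A) (B := A)).toLinearMap *
      toConv (Algebra.TensorProduct.includeRight (R := k) (A := A) (B := A)).toLinearMap =
      toConv (comul (R := k) (A := A)) := by
  ext a
  rw [(ℛ k a).convMul_apply]
  simp [(ℛ k a).eq]

/-- Composing an algebra map with the identity and with the antipode yields convolution inverses. -/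
theorem toConv_algHom_mul_toConv_comp_antipode {B : Type*} [Ring B] [Algebra k B] (f : A →ₐ[k] B) :
    toConv f.toLinearMap * toConv (f.toLinearMap ∘ₗ antipode k) = 1 := by
  have h := LinearMap.algHom_comp_convMul_distrib f (toConv LinearMap.id)
    (toConv (antipode k (A := A)))
  rw [LinearMap.id_mul_antipode] at h
  refine Eq.trans (congrArg toConv h.symm) ?_
  ext a
  simp [LinearMap.convOne_def]

theorem toConv_comp_antipode_mul_toConv_algHom {B : Type*} [Ring B] [Algebra k B] (f : A →ₐ[k] B) :
    toConv (f.toLinearMap ∘ₗ antipode k) * toConv f.toLinearMap = 1 := by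
  have h := LinearMap.algHom_comp_convMul_distrib f (toConv (antipode k (A := A)))
    (toConv LinearMap.id)
  rw [LinearMap.antipode_mul_id] at h
  refine Eq.trans (congrArg toConv h.symm) ?_
  ext a
  simp [LinearMap.convOne_def]

/-- The antipode reverses the comultiplication. -/
theorem comul_antipode (a : A) :
    comul (R := k) (antipode k a) =
      TensorProduct.map (antipode k) (antipode k) (TensorProduct.comm k A A (comul a)) := by
  let i₁ := Algebra.TensorProduct.includeLeft (R := k) (S := k) (A := A) (B := A)
  let i₂ := Algebra.TensorProduct.includeRight (R := k) (A := A) (B := A)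
  have hleft := toConv_comp_antipode_mul_toConv_algHom k (Bialgebra.comulAlgHom k A)
  have hright : toConv (Bialgebra.comulAlgHom k A).toLinearMap *
      (toConv (i₂.toLinearMap ∘ₗ antipode k) * toConv (i₁.toLinearMap ∘ₗ antipode k)) = 1 := by
    have hΔ : toConv (Bialgebra.comulAlgHom k A).toLinearMap =
        toConv i₁.toLinearMap * toConv i₂.toLinearMap :=
      (toConv_includeLeft_mul_toConv_includeRight k).symm
    rw [hΔ, mul_assoc, ← mul_assoc (toConv i₂.toLinearMap),
      toConv_algHom_mul_toConv_comp_antipode, one_mul, toConv_algHom_mul_toConv_comp_antipode]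
  have h := congr($(left_inv_eq_right_inv hleft hright) a)
  rw [(ℛ k a).convMul_apply] at h
  refine Eq.trans h ?_
  rw [← (ℛ k a).eq]
  simp [i₁, i₂]

theorem comul_antipode_antipode (a : A) :
    comul (R := k) (antipode k (antipode k a)) =
      TensorProduct.map (antipode k ∘ₗ antipode k) (antipode k ∘ₗ antipode k) (comul a) := by
  rw [comul_antipode, comul_antipode, ← (ℛ k a).eq]
  simp

/-- The square of the antipode is an algebra endomorphism. -/
def antipodeSqAlgHom : A →ₐ[k] A :=
  .ofLinearMap (antipode k ∘ₗ antipode k) (by simp) fun a b ↦ by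
    simp [antipode_mul_antidistrib]

theorem tmul_right_cancel {V W : Type*} [AddCommGroup V] [Module k V] [AddCommGroup W]
    [Module k W] {w : W} (hw : w ≠ 0) {v v' : V} (h : v ⊗ₜ[k] w = v' ⊗ₜ[k] w) : v = v' := by
  obtain ⟨f, hf⟩ := Module.Projective.exists_dual_ne_zero k hw
  have h' := congrArg (TensorProduct.rid k V ∘ LinearMap.lTensor V f) h
  simp only [Function.comp_apply, LinearMap.lTensor_tmul, TensorProduct.rid_tmul] at h'
  exact smul_right_injective V hf h'

theorem assoc_comul_tmul_comul (a : A) :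
    Algebra.TensorProduct.assoc k k k A A A
      (Algebra.TensorProduct.map (Bialgebra.comulAlgHom k A) (AlgHom.id k A) (comul (R := k) a)) =
    Algebra.TensorProduct.map (AlgHom.id k A) (Bialgebra.comulAlgHom k A) (comul (R := k) a) :=
  coassoc_apply a

/-- Theorem: if `Q` is a nonzero idempotent and `(1 ⊗ Q)Δ(Q) = Δ(Q)(1 ⊗ Q) = y ⊗ Q`,
then `y` is a right group-like projection; moreover `S²(Q) = Q` implies `S²(y) = y`. -/
theorem statement14
    (hS : Function.Bijective (HopfAlgebra.antipode (R := k) : A →ₗ[k] A))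
    (Q y : A) (hQ0 : Q ≠ 0) (hQ2 : Q * Q = Q)
    (h1 : ((1 : A) ⊗ₜ[k] Q) * Coalgebra.comul (R := k) Q = y ⊗ₜ[k] Q)
    (h2 : Coalgebra.comul (R := k) Q * ((1 : A) ⊗ₜ[k] Q) = y ⊗ₜ[k] Q) :
    IsRightGroupLikeProjection k y ∧
    (HopfAlgebra.antipode (R := k) (HopfAlgebra.antipode (R := k) Q) = Q →
      HopfAlgebra.antipode (R := k) (HopfAlgebra.antipode (R := k) y) = y) := by
  let Δ := Bialgebra.comulAlgHom k A
  let assoc := Algebra.TensorProduct.assoc k k k A A A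
  let D₁ := Algebra.TensorProduct.map Δ (AlgHom.id k A)
  let D₂ := Algebra.TensorProduct.map (AlgHom.id k A) Δ
  let E : A ⊗[k] (A ⊗[k] A) := 1 ⊗ₜ (1 ⊗ₜ Q)
  have hE : assoc (D₁ (1 ⊗ₜ Q)) = E := by
    simp [assoc, D₁, E, Algebra.TensorProduct.one_def]
  have hcoassoc : assoc (D₁ (comul (R := k) Q)) = D₂ (comul (R := k) Q) :=
    assoc_comul_tmul_comul k Q
  have hyQ₁ : assoc (comul (R := k) y ⊗ₜ Q) = E * D₂ (comul (R := k) Q) := by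
    rw [← hcoassoc, ← hE, ← map_mul, ← map_mul, h1]
    simp [D₁, Δ]
  have hyQ₂ : assoc (comul (R := k) y ⊗ₜ Q) = D₂ (comul (R := k) Q) * E := by
    rw [← hcoassoc, ← hE, ← map_mul, ← map_mul, h2]
    simp [D₁, Δ]
  have hy₁ : assoc (((1 : A) ⊗ₜ[k] y) ⊗ₜ[k] Q) = E * D₂ (1 ⊗ₜ Q) := by
    simp [assoc, D₂, E, Δ, h1]
  have hy₂ : assoc (((1 : A) ⊗ₜ[k] y) ⊗ₜ[k] Q) = D₂ (1 ⊗ₜ Q) * E := by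
    simp [assoc, D₂, E, Δ, h2]
  have hyy : E * D₂ (y ⊗ₜ Q) * E = assoc ((y ⊗ₜ[k] y) ⊗ₜ[k] Q) := by
    simp [assoc, D₂, E, Δ, h1, hQ2]
  refine ⟨⟨?_, ?_, ?_, ?_⟩, fun hSQ ↦ ?_⟩
  · rintro rfl
    have h := congrArg (TensorProduct.lid k A ∘ LinearMap.rTensor A (counit (R := k))) h1
    rw [← (ℛ k Q).eq, Finset.mul_sum] at h
    simp only [Algebra.TensorProduct.tmul_mul_tmul, one_mul, Function.comp_apply, map_sum,
      LinearMap.rTensor_tmul, TensorProduct.lid_tmul, map_zero, zero_smul] at h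
    simp_rw [← mul_smul_comm] at h
    rw [← Finset.mul_sum, sum_counit_smul, hQ2] at h
    exact hQ0 h
  · refine tmul_right_cancel k hQ0 (Eq.trans ?_ h2)
    have h : (y ⊗ₜ[k] Q) * (y ⊗ₜ[k] Q) = y ⊗ₜ[k] Q := by
      nth_rw 1 [← h1]
      rw [← h2, mul_assoc, ← mul_assoc (comul Q), ← Bialgebra.comul_mul, hQ2, h2]
      simp [hQ2]
    rwa [Algebra.TensorProduct.tmul_mul_tmul, hQ2, ← h2] at h
  · refine tmul_right_cancel k hQ0 (assoc.injective ?_)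
    rw [← hyy, ← h2, map_mul D₂, ← mul_assoc, ← hyQ₁, mul_assoc, ← hy₂, ← map_mul,
      Algebra.TensorProduct.tmul_mul_tmul, hQ2]
  · refine tmul_right_cancel k hQ0 (assoc.injective ?_)
    rw [← hyy, ← h1, map_mul D₂, ← mul_assoc, mul_assoc, ← hyQ₂, ← hy₁, ← map_mul,
      Algebra.TensorProduct.tmul_mul_tmul, hQ2]
  · refine tmul_right_cancel k hQ0 ?_
    let T := antipodeSqAlgHom k (A := A)
    have hTQ : T Q = Q := hSQ
    have hΔ : Algebra.TensorProduct.map T T (comul (R := k) Q) = comul (R := k) Q := by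
      refine (comul_antipode_antipode k Q).symm.trans ?_
      rw [hSQ]
    have h := congrArg (Algebra.TensorProduct.map T T) h1
    rw [map_mul, hΔ, Algebra.TensorProduct.map_tmul, Algebra.TensorProduct.map_tmul, hTQ,
      map_one, h1] at h
    exact h.symm
end
end

section
/- Let A be a Hopf algebra over a field k with bijective antipode S and let a, b ∈ A. The following are equivalent: (1) Δ(a)(1 ⊗ b) = Δ(b)(a ⊗ 1); (2) (b ⊗ 1)·((id ⊗ S)(Δ(a))) = a ⊗ b. Moreover, if these equivalent conditions hold then ab = ε(a)b = S(a)ε(b). -/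
open scoped TensorProduct

noncomputable section

variable (k : Type*) [Field k] {A : Type*} [Ring A] [HopfAlgebra k A]

open Coalgebra HopfAlgebra

/-- The linear map `x ⊗ y ↦ x₁ ⊗ f(x₂) y`. -/
def comulTwist (f : A →ₗ[k] A) : A ⊗[k] A →ₗ[k] A ⊗[k] A :=
  (LinearMap.mul' k A).lTensor A ∘ₗ (TensorProduct.assoc k A A A).toLinearMap ∘ₗ
    (f.lTensor A ∘ₗ comul).rTensor A

lemma comulTwist_tmul (f : A →ₗ[k] A) (x y : A) :
    comulTwist k f (x ⊗ₜ y) = f.lTensor A (comul (R := k) x) * ((1 : A) ⊗ₜ[k] y) := by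
  simp only [comulTwist, LinearMap.comp_apply, LinearMap.rTensor_tmul, LinearEquiv.coe_coe]
  generalize comul (R := k) x = t
  induction t with
  | zero => simp
  | add u v hu hv => simp only [map_add, TensorProduct.add_tmul, add_mul, hu, hv]
  | tmul p q => simp

/-- `comulTwist` turns convolution products into compositions. -/
lemma comulTwist_comulTwist (f g : A →ₗ[k] A) (x y : A) :
    comulTwist k f (comulTwist k g (x ⊗ₜ y)) =
      comulTwist k (LinearMap.mul' k A ∘ₗ TensorProduct.map f g ∘ₗ comul) (x ⊗ₜ y) := by
  have key (t : A ⊗[k] A) : comulTwist k f (g.lTensor A t * ((1 : A) ⊗ₜ[k] y)) =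
      (LinearMap.mul' k A ∘ₗ TensorProduct.map f g).lTensor A
        (TensorProduct.assoc k A A A ((comul (R := k)).rTensor A t)) * ((1 : A) ⊗ₜ[k] y) := by
    induction t with
    | zero => simp
    | add u v hu hv => simp only [map_add, add_mul, hu, hv]
    | tmul p q =>
      simp only [LinearMap.lTensor_tmul, LinearMap.rTensor_tmul,
        Algebra.TensorProduct.tmul_mul_tmul, mul_one, comulTwist_tmul]
      generalize comul (R := k) p = t
      induction t with
      | zero => simp
      | add u v hu hv => simp only [map_add, TensorProduct.add_tmul, add_mul, hu, hv]
      | tmul r s => simp [mul_assoc]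
  rw [comulTwist_tmul, key, coassoc_apply, comulTwist_tmul, ← LinearMap.comp_apply,
    ← LinearMap.lTensor_comp, LinearMap.comp_assoc]

lemma lTensor_unit_counit_comul (x : A) :
    (Algebra.linearMap k A ∘ₗ counit).lTensor A (comul (R := k) x) = x ⊗ₜ[k] (1 : A) := by
  rw [LinearMap.lTensor_comp, LinearMap.comp_apply, lTensor_counit_comul]
  simp

lemma comulTwist_unit_counit (x y : A) :
    comulTwist k (Algebra.linearMap k A ∘ₗ counit) (x ⊗ₜ y) = x ⊗ₜ[k] y := by
  rw [comulTwist_tmul, lTensor_unit_counit_comul]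
  simp

lemma comulTwist_antipode_comulTwist_id (x y : A) :
    comulTwist k (antipode k) (comulTwist k .id (x ⊗ₜ y)) = x ⊗ₜ[k] y := by
  rw [comulTwist_comulTwist, ← LinearMap.rTensor_def, mul_antipode_rTensor_comul,
    comulTwist_unit_counit]

lemma comulTwist_antipode_injective :
    Function.Injective (comulTwist k (antipode k : A →ₗ[k] A)) := by
  have h : comulTwist k .id ∘ₗ comulTwist k (antipode k : A →ₗ[k] A) = .id := by
    ext x y
    simp only [TensorProduct.AlgebraTensorModule.curry_apply, TensorProduct.curry_apply,
      LinearMap.coe_restrictScalars, LinearMap.comp_apply, LinearMap.id_apply]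
    rw [comulTwist_comulTwist, ← LinearMap.lTensor_def, mul_antipode_lTensor_comul,
      comulTwist_unit_counit]
  exact Function.LeftInverse.injective (g := comulTwist k .id) fun t ↦ LinearMap.congr_fun h t

/-- The linear map `x ⊗ y ↦ (x ⊗ 1) d (1 ⊗ y)`. -/
def outerMul (d : A ⊗[k] A) : A ⊗[k] A →ₗ[k] A ⊗[k] A :=
  LinearMap.mul' k (A ⊗[k] A) ∘ₗ TensorProduct.map
    (LinearMap.mulRight k d ∘ₗ (TensorProduct.mk k A A).flip 1) (TensorProduct.mk k A A 1)

lemma outerMul_tmul (d : A ⊗[k] A) (x y : A) :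
    outerMul k d (x ⊗ₜ y) = (x ⊗ₜ[k] (1 : A)) * d * ((1 : A) ⊗ₜ[k] y) := by
  simp [outerMul]

lemma lTensor_antipode_tmul_mul (p q : A) (t : A ⊗[k] A) :
    (antipode k).lTensor A ((p ⊗ₜ q) * t) =
      (p ⊗ₜ[k] (1 : A)) * (antipode k).lTensor A t * ((1 : A) ⊗ₜ[k] antipode k q) := by
  induction t with
  | zero => simp
  | add u v hu hv => simp only [map_add, mul_add, add_mul, hu, hv]
  | tmul r s => simp [antipode_mul_antidistrib]

lemma comulTwist_antipode_comul_mul (a b : A) :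
    comulTwist k (antipode k) (comul (R := k) b * (a ⊗ₜ[k] (1 : A))) =
      (b ⊗ₜ[k] (1 : A)) * (antipode k).lTensor A (comul (R := k) a) := by
  have key (t : A ⊗[k] A) : comulTwist k (antipode k) (t * (a ⊗ₜ[k] (1 : A))) =
      outerMul k ((antipode k).lTensor A (comul (R := k) a))
        ((LinearMap.mul' k A ∘ₗ (antipode k).rTensor A).lTensor A
          (TensorProduct.assoc k A A A ((comul (R := k)).rTensor A t))) := by
    induction t with
    | zero => simp
    | add u v hu hv => simp only [map_add, add_mul, hu, hv]
    | tmul p q =>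
      simp only [LinearMap.rTensor_tmul, Algebra.TensorProduct.tmul_mul_tmul, mul_one,
        comulTwist_tmul, Bialgebra.comul_mul]
      generalize comul (R := k) p = t
      induction t with
      | zero => simp
      | add u v hu hv => simp only [map_add, TensorProduct.add_tmul, add_mul, hu, hv]
      | tmul r s => simp [lTensor_antipode_tmul_mul, outerMul_tmul, mul_assoc]
  rw [key, coassoc_apply, ← LinearMap.lTensor_comp_apply,
    LinearMap.comp_assoc, mul_antipode_rTensor_comul,
    lTensor_unit_counit_comul, outerMul_tmul, ← Algebra.TensorProduct.one_def, mul_one]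

lemma comul_mul_eq_iff (a b : A) :
    comul (R := k) a * ((1 : A) ⊗ₜ[k] b) = comul (R := k) b * (a ⊗ₜ[k] (1 : A)) ↔
      (b ⊗ₜ[k] (1 : A)) * (antipode k).lTensor A (comul (R := k) a) = a ⊗ₜ[k] b := by
  have h := comulTwist_antipode_comulTwist_id k a b
  rw [comulTwist_tmul, LinearMap.lTensor_id, LinearMap.id_apply] at h
  rw [← (comulTwist_antipode_injective k).eq_iff, h, comulTwist_antipode_comul_mul, eq_comm]

/-- The linear map `x ⊗ y ↦ ε(x) y` is multiplicative. -/
lemma lid_rTensor_counit_mul (s t : A ⊗[k] A) :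
    TensorProduct.lid k A ((counit (R := k)).rTensor A (s * t)) =
      TensorProduct.lid k A ((counit (R := k)).rTensor A s) *
        TensorProduct.lid k A ((counit (R := k)).rTensor A t) := by
  induction s with
  | zero => simp
  | add u v hu hv => simp only [map_add, add_mul, hu, hv]
  | tmul p q =>
    induction t with
    | zero => simp
    | add u v hu hv => simp only [map_add, mul_add, hu, hv]
    | tmul r s => simp [smul_smul, mul_comm]

/-- Theorem: `Δ(a)(1 ⊗ b) = Δ(b)(a ⊗ 1)` iff `(b ⊗ 1)·(id ⊗ S)(Δ(a)) = a ⊗ b`;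
moreover these conditions imply `ab = ε(a)b = S(a)ε(b)`. -/
theorem statement16
    (hS : Function.Bijective (HopfAlgebra.antipode (R := k) : A →ₗ[k] A))
    (a b : A) :
    (Coalgebra.comul (R := k) a * ((1 : A) ⊗ₜ[k] b) =
        Coalgebra.comul (R := k) b * (a ⊗ₜ[k] (1 : A)) ↔
      (b ⊗ₜ[k] (1 : A)) *
          (TensorProduct.map LinearMap.id (HopfAlgebra.antipode (R := k))
            (Coalgebra.comul (R := k) a)) = a ⊗ₜ[k] b) ∧
    (Coalgebra.comul (R := k) a * ((1 : A) ⊗ₜ[k] b) =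
        Coalgebra.comul (R := k) b * (a ⊗ₜ[k] (1 : A)) →
      a * b = Coalgebra.counit (R := k) a • b ∧
      a * b = Coalgebra.counit (R := k) b • HopfAlgebra.antipode (R := k) a) := by
  refine ⟨comul_mul_eq_iff k a b, fun h ↦ ?_⟩
  have hab : a * b = counit (R := k) a • b := by
    simpa [lid_rTensor_counit_mul] using
      congr(TensorProduct.lid k A ((counit (R := k)).rTensor A $h))
  refine ⟨hab, hab.trans ?_⟩
  have hS' : TensorProduct.lid k A ((counit (R := k)).rTensor A
      ((antipode k).lTensor A (comul (R := k) a))) = antipode k a := by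
    rw [← LinearMap.comp_apply (LinearMap.rTensor _ _), LinearMap.rTensor_comp_lTensor,
      ← LinearMap.lTensor_comp_rTensor, LinearMap.comp_apply, rTensor_counit_comul]
    simp
  have h2 := congr(TensorProduct.lid k A
    ((counit (R := k)).rTensor A $((comul_mul_eq_iff k a b).1 h)))
  rw [lid_rTensor_counit_mul, hS'] at h2
  simpa using h2.symm
end
end

section
/- Let A be a Hopf algebra over a field k with bijective antipode S and let P ∈ A be a nonzero idempotent satisfying Δ(P)(1 ⊗ P) = Δ(P)(P ⊗ 1). Then ε(P) = 1, S(P) = P, and (P ⊗ 1)Δ(P) = Δ(P)(P ⊗ 1) = P ⊗ P; in particular P is a two-sided group-like projection. Moreover every two-sided group-like projection P satisfies S(P) = P. -/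
open scoped TensorProduct

noncomputable section

variable (k : Type*) [Field k] {A : Type*} [Ring A] [HopfAlgebra k A]

open Coalgebra HopfAlgebra

/-- The linear map `a ⊗ b ↦ a₁ ⊗ S(a₂)b`, inverse to the Galois map `a ⊗ b ↦ Δ(a)(1 ⊗ b)`. -/
def rightGaloisInv : A ⊗[k] A →ₗ[k] A ⊗[k] A :=
  (LinearMap.mul' k A ∘ₗ (antipode k).rTensor A).lTensor A ∘ₗ
    (TensorProduct.assoc k A A A).toLinearMap ∘ₗ comul.rTensor A

/-- The linear map `a ⊗ b ↦ aS(b₁) ⊗ b₂`, inverse to the Galois map `a ⊗ b ↦ (a ⊗ 1)Δ(b)`. -/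
def leftGaloisInv : A ⊗[k] A →ₗ[k] A ⊗[k] A :=
  (LinearMap.mul' k A ∘ₗ (antipode k).lTensor A).rTensor A ∘ₗ
    (TensorProduct.assoc k A A A).symm.toLinearMap ∘ₗ comul.lTensor A

lemma rightGaloisInv_comul (a : A) : rightGaloisInv k (comul (R := k) a) = a ⊗ₜ[k] (1 : A) := by
  simp only [rightGaloisInv, LinearMap.comp_apply, LinearEquiv.coe_coe, coassoc_apply]
  rw [← LinearMap.comp_apply, ← LinearMap.lTensor_comp, LinearMap.comp_assoc,
    mul_antipode_rTensor_comul, LinearMap.lTensor_comp, LinearMap.comp_apply,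
    lTensor_counit_comul]
  simp

lemma leftGaloisInv_comul (a : A) : leftGaloisInv k (comul (R := k) a) = (1 : A) ⊗ₜ[k] a := by
  simp only [leftGaloisInv, LinearMap.comp_apply, LinearEquiv.coe_coe, coassoc_symm_apply]
  rw [← LinearMap.comp_apply, ← LinearMap.rTensor_comp, LinearMap.comp_assoc,
    mul_antipode_lTensor_comul, LinearMap.rTensor_comp, LinearMap.comp_apply,
    rTensor_counit_comul]
  simp

lemma rightGaloisInv_tmul {ι : Type*} {a : A} (r : Repr k a ι) (b : A) :
    rightGaloisInv k (a ⊗ₜ[k] b) =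
      ∑ i ∈ r.index, r.left i ⊗ₜ[k] (antipode k (r.right i) * b) := by
  simp [rightGaloisInv, ← r.eq, TensorProduct.sum_tmul]

lemma leftGaloisInv_tmul {ι : Type*} (a : A) {b : A} (r : Repr k b ι) :
    leftGaloisInv k (a ⊗ₜ[k] b) =
      ∑ i ∈ r.index, (a * antipode k (r.left i)) ⊗ₜ[k] r.right i := by
  simp [leftGaloisInv, ← r.eq, TensorProduct.tmul_sum]

lemma rightGaloisInv_mul_one_tmul (x : A ⊗[k] A) (b : A) :
    rightGaloisInv k (x * ((1 : A) ⊗ₜ[k] b)) = rightGaloisInv k x * ((1 : A) ⊗ₜ[k] b) := by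
  induction x with
  | zero => simp
  | add x y hx hy => simp [add_mul, hx, hy]
  | tmul a c =>
    simp [rightGaloisInv_tmul k (ℛ k a), Finset.sum_mul, mul_assoc]

lemma leftGaloisInv_tmul_one_mul (b : A) (x : A ⊗[k] A) :
    leftGaloisInv k ((b ⊗ₜ[k] (1 : A)) * x) = (b ⊗ₜ[k] (1 : A)) * leftGaloisInv k x := by
  induction x with
  | zero => simp
  | add x y hx hy => simp [mul_add, hx, hy]
  | tmul a c =>
    simp [leftGaloisInv_tmul k _ (ℛ k c), Finset.mul_sum, mul_assoc]

lemma rightGaloisInv_mul_tmul_one {ι : Type*} (x : A ⊗[k] A) {b : A} (r : Repr k b ι) :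
    rightGaloisInv k (x * (b ⊗ₜ[k] (1 : A))) =
      ∑ i ∈ r.index, ((1 : A) ⊗ₜ[k] antipode k (r.right i)) * rightGaloisInv k x *
        (r.left i ⊗ₜ[k] (1 : A)) := by
  induction x with
  | zero => simp
  | add x y hx hy => simp [add_mul, mul_add, hx, hy, Finset.sum_add_distrib]
  | tmul a c =>
    rw [Algebra.TensorProduct.tmul_mul_tmul, rightGaloisInv_tmul k ((ℛ k a).mul r),
      rightGaloisInv_tmul k (ℛ k a)]
    simp only [Repr.mul_index, Repr.mul_left, Repr.mul_right, Finset.sum_product_right,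
      Finset.mul_sum, Finset.sum_mul]
    simp [antipode_mul_antidistrib, mul_assoc]

/-- `a ⊗ b ↦ a₁ ⊗ S(a₂)b` sends `Δ(a)(b ⊗ 1)` to `ab₁ ⊗ S(b₂)`. -/
lemma rightGaloisInv_comul_mul_tmul_one (a b : A) :
    rightGaloisInv k (comul (R := k) a * (b ⊗ₜ[k] (1 : A))) =
      (antipode k).lTensor A ((a ⊗ₜ[k] (1 : A)) * comul (R := k) b) := by
  rw [rightGaloisInv_mul_tmul_one k _ (ℛ k b), rightGaloisInv_comul]
  conv_rhs => rw [← (ℛ k b).eq]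
  simp [Finset.mul_sum]

lemma rightGaloisInv_tmul_antipode (a b : A) :
    rightGaloisInv k (a ⊗ₜ[k] antipode k b) =
      (antipode k).lTensor A (((1 : A) ⊗ₜ[k] b) * comul (R := k) a) := by
  rw [rightGaloisInv_tmul k (ℛ k a)]
  conv_rhs => rw [← (ℛ k a).eq]
  simp [Finset.mul_sum, antipode_mul_antidistrib]

lemma leftGaloisInv_antipode_tmul (a b : A) :
    leftGaloisInv k (antipode k a ⊗ₜ[k] b) =
      (antipode k).rTensor A (comul (R := k) b * (a ⊗ₜ[k] (1 : A))) := by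
  rw [leftGaloisInv_tmul k _ (ℛ k b)]
  conv_rhs => rw [← (ℛ k b).eq]
  simp [Finset.sum_mul, antipode_mul_antidistrib]

section

variable {k}
variable {P : A}

lemma counit_eq_one_of_comul_mul_eq (hP0 : P ≠ 0) (hP2 : P * P = P)
    (h : comul (R := k) P * ((1 : A) ⊗ₜ[k] P) = comul (R := k) P * (P ⊗ₜ[k] (1 : A))) :
    counit (R := k) P = 1 := by
  have hl : ∀ x : A ⊗[k] A, counit.rTensor A (x * ((1 : A) ⊗ₜ[k] P)) =
      counit.rTensor A x * ((1 : k) ⊗ₜ[k] P) := fun x ↦ by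
    induction x with
    | zero => simp
    | add x y hx hy => simp [add_mul, hx, hy]
    | tmul a c => simp
  have hr : ∀ x : A ⊗[k] A, counit.rTensor A (x * (P ⊗ₜ[k] (1 : A))) =
      counit (R := k) P • counit.rTensor A x := fun x ↦ by
    induction x with
    | zero => simp
    | add x y hx hy => simp [add_mul, hx, hy]
    | tmul a c => simp [TensorProduct.smul_tmul', mul_comm]
  have key := congrArg (fun x ↦ TensorProduct.lid k A (counit.rTensor A x)) h
  simp only [hl, hr, rTensor_counit_comul] at key
  simp only [Algebra.TensorProduct.tmul_mul_tmul, mul_one, hP2, map_smul,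
    TensorProduct.lid_tmul, one_smul] at key
  exact smul_left_injective k hP0 (by simpa using key.symm)

/-- `PP₁ ⊗ S(P₂) = P ⊗ P`. -/
lemma lTensor_antipode_tmul_one_mul_comul
    (h : comul (R := k) P * ((1 : A) ⊗ₜ[k] P) = comul (R := k) P * (P ⊗ₜ[k] (1 : A))) :
    (antipode k).lTensor A ((P ⊗ₜ[k] (1 : A)) * comul (R := k) P) = P ⊗ₜ[k] P := by
  rw [← rightGaloisInv_comul_mul_tmul_one, ← h, rightGaloisInv_mul_one_tmul,
    rightGaloisInv_comul]
  simp

lemma antipode_eq_self_of_comul_mul_eq (hP0 : P ≠ 0) (hP2 : P * P = P)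
    (h : comul (R := k) P * ((1 : A) ⊗ₜ[k] P) = comul (R := k) P * (P ⊗ₜ[k] (1 : A))) :
    antipode k P = P := by
  have hε := counit_eq_one_of_comul_mul_eq hP0 hP2 h
  have hl : ∀ x : A ⊗[k] A,
      counit.rTensor A ((antipode k).lTensor A ((P ⊗ₜ[k] (1 : A)) * x)) =
      (antipode k).lTensor k (counit.rTensor A x) := fun x ↦ by
    induction x with
    | zero => simp
    | add x y hx hy => simp [mul_add, hx, hy]
    | tmul a c => simp [hε]
  have key := congrArg (fun x ↦ TensorProduct.lid k A (counit.rTensor A x))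
    (lTensor_antipode_tmul_one_mul_comul h)
  simpa [hl, hε] using key

lemma tmul_one_mul_comul_of_comul_mul_eq
    (hS : Function.Injective (antipode k : A →ₗ[k] A)) (hP0 : P ≠ 0) (hP2 : P * P = P)
    (h : comul (R := k) P * ((1 : A) ⊗ₜ[k] P) = comul (R := k) P * (P ⊗ₜ[k] (1 : A))) :
    (P ⊗ₜ[k] (1 : A)) * comul (R := k) P = P ⊗ₜ[k] P := by
  refine Module.Flat.lTensor_preserves_injective_linearMap (M := A) _ hS ?_
  rw [lTensor_antipode_tmul_one_mul_comul h, LinearMap.lTensor_tmul,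
    antipode_eq_self_of_comul_mul_eq hP0 hP2 h]

lemma comul_mul_tmul_one_of_tmul_one_mul_comul
    (hS : Function.Injective (antipode k : A →ₗ[k] A)) (hSP : antipode k P = P)
    (h : (P ⊗ₜ[k] (1 : A)) * comul (R := k) P = P ⊗ₜ[k] P) :
    comul (R := k) P * (P ⊗ₜ[k] (1 : A)) = P ⊗ₜ[k] P := by
  refine Module.Flat.rTensor_preserves_injective_linearMap (M := A) _ hS ?_
  rw [← leftGaloisInv_antipode_tmul, hSP, ← h, leftGaloisInv_tmul_one_mul,
    leftGaloisInv_comul, h]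
  simp [hSP]

lemma one_tmul_mul_comul_of_comul_mul_one_tmul
    (hS : Function.Injective (antipode k : A →ₗ[k] A)) (hSP : antipode k P = P)
    (h : comul (R := k) P * ((1 : A) ⊗ₜ[k] P) = P ⊗ₜ[k] P) :
    ((1 : A) ⊗ₜ[k] P) * comul (R := k) P = P ⊗ₜ[k] P := by
  refine Module.Flat.lTensor_preserves_injective_linearMap (M := A) _ hS ?_
  rw [← rightGaloisInv_tmul_antipode, hSP, ← h, rightGaloisInv_mul_one_tmul,
    rightGaloisInv_comul, h]
  simp [hSP]

end

/-- Theorem: a nonzero idempotent `P` with `Δ(P)(1 ⊗ P) = Δ(P)(P ⊗ 1)` satisfies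
`ε(P) = 1`, `S(P) = P` and `(P ⊗ 1)Δ(P) = Δ(P)(P ⊗ 1) = P ⊗ P`; in particular `P` is a
two-sided group-like projection.  Moreover every two-sided group-like projection is
fixed by the antipode. -/
theorem statement17
    (hS : Function.Bijective (HopfAlgebra.antipode (R := k) : A →ₗ[k] A))
    (P : A) (hP0 : P ≠ 0) (hP2 : P * P = P)
    (h : Coalgebra.comul (R := k) P * ((1 : A) ⊗ₜ[k] P) =
      Coalgebra.comul (R := k) P * (P ⊗ₜ[k] (1 : A))) :
    (Coalgebra.counit (R := k) P = (1 : k) ∧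
      HopfAlgebra.antipode (R := k) P = P ∧
      (P ⊗ₜ[k] (1 : A)) * Coalgebra.comul (R := k) P = P ⊗ₜ[k] P ∧
      Coalgebra.comul (R := k) P * (P ⊗ₜ[k] (1 : A)) = P ⊗ₜ[k] P ∧
      IsTwoSidedGroupLikeProjection k P) ∧
    (∀ P' : A, IsTwoSidedGroupLikeProjection k P' →
      HopfAlgebra.antipode (R := k) P' = P') := by
  have hSP := antipode_eq_self_of_comul_mul_eq hP0 hP2 h
  have hl := tmul_one_mul_comul_of_comul_mul_eq hS.1 hP0 hP2 h
  have hr := comul_mul_tmul_one_of_tmul_one_mul_comul hS.1 hSP hl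
  have hr1 := h.trans hr
  refine ⟨⟨counit_eq_one_of_comul_mul_eq hP0 hP2 h, hSP, hl, hr,
    ⟨hP0, hP2, hr1, one_tmul_mul_comul_of_comul_mul_one_tmul hS.1 hSP hr1⟩, hP0, hP2, hr, hl⟩, ?_⟩
  rintro Q ⟨⟨hQ0, hQ2, hQr, -⟩, -, -, hQl, -⟩
  exact antipode_eq_self_of_comul_mul_eq hQ0 hQ2 (hQr.trans hQl.symm)
end
end
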